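/- Let d, N ∈ ℕ with N ≥ 1, let ρ_d be a probability density on [0,1]^d with ρ_d > 0 almost everywhere and C := ∫_{[0,1]^d} (∏_{j=1}^d (1−t_j))/ρ_d(t) dt < ∞, and let t_1,…,t_N be i.i.d. with law ρ_d(t)dt. For c > 0 consider the weights a_k = c/(N ρ_d(t_k)) and define E(c) := E[∫_{[0,1]^d} Δ(x)² dx]. Then E(c) = 3^{−d} − 2c·3^{−d} + c²·(C/N + 3^{−d}(N−1)/N), the map c ↦ E(c) attains its unique minimum over (0,∞) at c* = N/(N−1+3^d C), and E(c*) = c*·E(1) = c*·(C − 3^{−d})/N. -/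

import Mathlib

open MeasureTheory

/-!
Write `h(t, x) = 1_{[0,x)}(t) / ρ(t)`. Under the sampling law `ρ(t) dt` this importance-weighted
indicator has mean `x₁⋯x_d`, so for fixed `x` the random variable `(c/N) ∑ₖ h(tₖ, x)` estimates
`x₁⋯x_d` with bias `(c - 1) x₁⋯x_d` and variance `(c²/N) Var h(·, x)`. Integrating the bias-variance
decomposition over `x` gives `E(c) = (1 - c)² z + c² v` with `z = 3^{-d}` and `v = (C - z) / N`.
Since `v = E(1) ≥ 0`, completing the square around `c* = z / (z + v)` finishes the proof:
`E(c) = c* v + (z + v) (c - c*)²`.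
-/

open ProbabilityTheory Fintype

lemma ae_memLp_two_section {α X : Type*} [MeasurableSpace α] [MeasurableSpace X] {P : Measure α}
    {ν : Measure X} [SFinite P] [SFinite ν] {h : α → X → ℝ}
    (hh : MemLp (Function.uncurry h) 2 (P.prod ν)) :
    ∀ᵐ x ∂ν, MemLp (fun t => h t x) 2 P := by
  filter_upwards [hh.integrable_sq.prod_left_ae, hh.aestronglyMeasurable.prodMk_right] with x hsq hm
  exact (memLp_two_iff_integrable_sq hm).2 hsq

section BiasVariance

variable {Ω : Type*} [MeasurableSpace Ω] {Q : Measure Ω} [IsProbabilityMeasure Q]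

lemma integral_sq_sub_const_eq_variance_add_sq {Y : Ω → ℝ} (hY : MemLp Y 2 Q) (m : ℝ) :
    ∫ ω, (Y ω - m) ^ 2 ∂Q = Var[Y; Q] + (∫ ω, Y ω ∂Q - m) ^ 2 := by
  have hYm : MemLp (fun ω => Y ω - m) 2 Q := hY.sub (memLp_const m)
  have hmean : ∫ ω, (Y ω - m) ∂Q = ∫ ω, Y ω ∂Q - m := by
    rw [integral_sub (hY.integrable one_le_two) (integrable_const m)]
    simp
  have hvar := variance_eq_sub hYm
  rw [variance_sub_const hY.aestronglyMeasurable, hmean] at hvar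
  simp only [Pi.pow_apply] at hvar
  linarith

variable {α κ : Type*} [MeasurableSpace α] [Fintype κ]
  {P : Measure α} [IsProbabilityMeasure P] {f : α → ℝ}

lemma integral_pi_sum_div_card_mul [Nonempty κ] (hf : Integrable f P) (c : ℝ) :
    ∫ T, ∑ k, c / card κ * f (T k) ∂Measure.pi (fun _ : κ => P) = c * ∫ t, f t ∂P := by
  rw [integral_finsetSum _ fun k _ => (integrable_comp_eval hf).const_mul _]
  have heval (k : κ) : ∫ T, f (T k) ∂Measure.pi (fun _ : κ => P) = ∫ t, f t ∂P :=
    integral_comp_eval (μ := fun _ : κ => P) hf.aestronglyMeasurable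
  simp_rw [integral_const_mul, heval]
  rw [Finset.sum_const, Finset.card_univ, nsmul_eq_mul]
  field_simp

lemma variance_pi_sum_div_card_mul [Nonempty κ] (hf : MemLp f 2 P) (c : ℝ) :
    Var[fun T => ∑ k, c / card κ * f (T k); Measure.pi (fun _ : κ => P)]
      = c ^ 2 / card κ * Var[f; P] := by
  have hsum : (fun T : κ → α => ∑ k, c / card κ * f (T k))
      = ∑ k, fun T : κ → α => c / card κ * f (T k) := by
    ext T
    simp only [Finset.sum_apply]
  rw [hsum, variance_sum_pi (X := fun _ t => c / card κ * f t) fun _ => hf.const_mul _]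
  simp_rw [variance_const_mul]
  rw [Finset.sum_const, Finset.card_univ, nsmul_eq_mul]
  field_simp

lemma memLp_pi_sum_mul_eval {p : ENNReal} (hf : MemLp f p P) (a : ℝ) :
    MemLp (fun T => ∑ k, a * f (T k)) p (Measure.pi (fun _ : κ => P)) :=
  memLp_finsetSum _ fun k _ =>
    (hf.comp_measurePreserving (measurePreserving_eval (fun _ : κ => P) k)).const_mul a

theorem integral_pi_sq_sum_div_card_mul_sub_integral [Nonempty κ] (hf : MemLp f 2 P) (c : ℝ) :
    ∫ T, (∑ k, c / card κ * f (T k) - ∫ t, f t ∂P) ^ 2 ∂Measure.pi (fun _ : κ => P)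
      = (1 - c) ^ 2 * (∫ t, f t ∂P) ^ 2
        + c ^ 2 / card κ * (∫ t, f t ^ 2 ∂P - (∫ t, f t ∂P) ^ 2) := by
  rw [integral_sq_sub_const_eq_variance_add_sq (memLp_pi_sum_mul_eval hf _),
    integral_pi_sum_div_card_mul (hf.integrable one_le_two), variance_pi_sum_div_card_mul hf,
    variance_eq_sub hf]
  simp only [Pi.pow_apply]
  ring

variable {X : Type*} [MeasurableSpace X] {ν : Measure X} [SFinite ν]
  {h : α → X → ℝ} {g : X → ℝ}

lemma integrable_pi_prod_sq_sum_mul_sub (hh : MemLp (Function.uncurry h) 2 (P.prod ν))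
    (hg : MemLp g 2 ν) (a : ℝ) :
    Integrable (fun q : (κ → α) × X => (∑ k, a * h (q.1 k) q.2 - g q.2) ^ 2)
      ((Measure.pi fun _ : κ => P).prod ν) := by
  have hterm (k : κ) : MemLp (fun q : (κ → α) × X => h (q.1 k) q.2) 2
      ((Measure.pi fun _ : κ => P).prod ν) :=
    hh.comp_measurePreserving
      ((measurePreserving_eval (fun _ : κ => P) k).prod (MeasurePreserving.id ν))
  exact ((memLp_finsetSum _ fun k _ => (hterm k).const_mul a).sub
    (hg.comp_snd (Measure.pi fun _ : κ => P))).integrable_sq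

theorem integral_pi_integral_sq_sum_div_card_mul_sub [Nonempty κ]
    (hh : MemLp (Function.uncurry h) 2 (P.prod ν)) (hg : MemLp g 2 ν)
    (hmean : ∀ᵐ x ∂ν, ∫ t, h t x ∂P = g x) (c : ℝ) :
    ∫ T, ∫ x, (∑ k, c / card κ * h (T k) x - g x) ^ 2 ∂ν ∂Measure.pi (fun _ : κ => P)
      = (1 - c) ^ 2 * ∫ x, g x ^ 2 ∂ν
        + c ^ 2 / card κ * (∫ t, ∫ x, h t x ^ 2 ∂ν ∂P - ∫ x, g x ^ 2 ∂ν) := by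
  have hh_sq : Integrable (Function.uncurry fun t x => h t x ^ 2) (P.prod ν) := hh.integrable_sq
  have hsection : ∀ᵐ x ∂ν,
      ∫ T, (∑ k, c / card κ * h (T k) x - g x) ^ 2 ∂Measure.pi (fun _ : κ => P)
        = (1 - c) ^ 2 * g x ^ 2 + c ^ 2 / card κ * (∫ t, h t x ^ 2 ∂P - g x ^ 2) := by
    filter_upwards [hmean, ae_memLp_two_section hh] with x hx hmem
    rw [← hx]
    exact integral_pi_sq_sum_div_card_mul_sub_integral hmem c
  have hmoment : Integrable (fun x => ∫ t, h t x ^ 2 ∂P) ν := hh_sq.integral_prod_right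
  have hvariance : Integrable (fun x => ∫ t, h t x ^ 2 ∂P - g x ^ 2) ν :=
    hmoment.sub hg.integrable_sq
  rw [integral_integral_swap (integrable_pi_prod_sq_sum_mul_sub hh hg _),
    integral_congr_ae hsection,
    integral_add (hg.integrable_sq.const_mul _) (hvariance.const_mul _),
    integral_const_mul, integral_const_mul,
    integral_sub hmoment hg.integrable_sq, integral_integral_swap hh_sq]

end BiasVariance

section WithDensity

variable {α : Type*} [MeasurableSpace α] {μ : Measure α} {ρ : α → ℝ}

lemma isProbabilityMeasure_withDensity_ofReal (hρ_nonneg : 0 ≤ᵐ[μ] ρ)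
    (hρ_one : ∫ t, ρ t ∂μ = 1) :
    IsProbabilityMeasure (μ.withDensity fun t => ENNReal.ofReal (ρ t)) := by
  have hρ : Integrable ρ μ := .of_integral_ne_zero (by simp [hρ_one])
  constructor
  rw [withDensity_apply _ .univ, Measure.restrict_univ,
    ← ofReal_integral_eq_lintegral_ofReal hρ hρ_nonneg, hρ_one, ENNReal.ofReal_one]

lemma integral_withDensity_ofReal (hρ : AEMeasurable ρ μ) (hρ_nonneg : 0 ≤ᵐ[μ] ρ) (F : α → ℝ) :
    ∫ t, F t ∂μ.withDensity (fun t => ENNReal.ofReal (ρ t)) = ∫ t, ρ t * F t ∂μ := by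
  rw [integral_withDensity_eq_integral_toReal_smul₀ hρ.ennreal_ofReal (by simp)]
  refine integral_congr_ae ?_
  filter_upwards [hρ_nonneg] with t ht
  rw [ENNReal.toReal_ofReal ht, smul_eq_mul]

lemma integral_div_withDensity_ofReal (hρ : AEMeasurable ρ μ) (hρ_pos : ∀ᵐ t ∂μ, 0 < ρ t)
    (F : α → ℝ) :
    ∫ t, F t / ρ t ∂μ.withDensity (fun t => ENNReal.ofReal (ρ t)) = ∫ t, F t ∂μ := by
  rw [integral_withDensity_ofReal hρ (hρ_pos.mono fun _ ht => ht.le)]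
  refine integral_congr_ae ?_
  filter_upwards [hρ_pos] with t ht using mul_div_cancel₀ _ ht.ne'

lemma integrable_div_withDensity_ofReal_iff (hρ : AEMeasurable ρ μ)
    (hρ_pos : ∀ᵐ t ∂μ, 0 < ρ t) {F : α → ℝ} :
    Integrable (fun t => F t / ρ t) (μ.withDensity fun t => ENNReal.ofReal (ρ t))
      ↔ Integrable F μ := by
  rw [integrable_withDensity_iff_integrable_smul₀' hρ.ennreal_ofReal (by simp)]
  refine integrable_congr ?_
  filter_upwards [hρ_pos] with t ht
  rw [ENNReal.toReal_ofReal ht.le, smul_eq_mul, mul_div_cancel₀ _ ht.ne']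

end WithDensity

section PiWithDensity

variable {κ : Type*} [Fintype κ] {α : κ → Type*} [∀ k, MeasurableSpace (α k)]
  {μ : ∀ k, Measure (α k)} [∀ k, SigmaFinite (μ k)] {ρ : ∀ k, α k → ℝ}

lemma ae_pi_prod_nonneg (hρ_nonneg : ∀ k, 0 ≤ᵐ[μ k] ρ k) :
    ∀ᵐ T ∂Measure.pi μ, 0 ≤ ∏ k, ρ k (T k) := by
  have heval : ∀ᵐ T ∂Measure.pi μ, ∀ k, 0 ≤ ρ k (T k) :=
    ae_all_iff.2 fun k => Measure.tendsto_eval_ae_ae.eventually (hρ_nonneg k)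
  filter_upwards [heval] with T hT using Finset.prod_nonneg fun k _ => hT k

theorem pi_withDensity_ofReal (hρ : ∀ k, Integrable (ρ k) (μ k))
    (hρ_nonneg : ∀ k, 0 ≤ᵐ[μ k] ρ k) :
    Measure.pi (fun k => (μ k).withDensity fun t => ENNReal.ofReal (ρ k t))
      = (Measure.pi μ).withDensity fun T => ENNReal.ofReal (∏ k, ρ k (T k)) := by
  have (k : κ) : IsFiniteMeasure ((μ k).withDensity fun t => ENNReal.ofReal (ρ k t)) :=
    isFiniteMeasure_withDensity_ofReal (hρ k).2
  refine Measure.pi_eq fun s hs => ?_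
  calc (Measure.pi μ).withDensity (fun T => ENNReal.ofReal (∏ k, ρ k (T k))) (Set.univ.pi s)
      = ENNReal.ofReal (∫ T in Set.univ.pi s, ∏ k, ρ k (T k) ∂Measure.pi μ) := by
        rw [withDensity_apply _ (.univ_pi hs), ofReal_integral_eq_lintegral_ofReal
          (Integrable.fintype_prod_dep hρ).integrableOn
          (ae_restrict_of_ae (ae_pi_prod_nonneg hρ_nonneg))]
    _ = ENNReal.ofReal (∏ k, ∫ t in s k, ρ k t ∂μ k) := by
        rw [Measure.restrict_pi_pi, integral_fintype_prod_eq_prod ρ]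
    _ = ∏ k, ENNReal.ofReal (∫ t in s k, ρ k t ∂μ k) :=
        ENNReal.ofReal_prod_of_nonneg fun k _ =>
          integral_nonneg_of_ae (ae_restrict_of_ae (hρ_nonneg k))
    _ = ∏ k, (μ k).withDensity (fun t => ENNReal.ofReal (ρ k t)) (s k) := by
        refine Finset.prod_congr rfl fun k _ => ?_
        rw [withDensity_apply _ (hs k), ofReal_integral_eq_lintegral_ofReal (hρ k).integrableOn
          (ae_restrict_of_ae (hρ_nonneg k))]

lemma integral_pi_withDensity_ofReal (hρ : ∀ k, Integrable (ρ k) (μ k))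
    (hρ_nonneg : ∀ k, 0 ≤ᵐ[μ k] ρ k) (F : (∀ k, α k) → ℝ) :
    ∫ T, F T ∂Measure.pi (fun k => (μ k).withDensity fun t => ENNReal.ofReal (ρ k t))
      = ∫ T, (∏ k, ρ k (T k)) * F T ∂Measure.pi μ := by
  rw [pi_withDensity_ofReal hρ hρ_nonneg]
  exact integral_withDensity_ofReal
    (Integrable.fintype_prod_dep hρ).aestronglyMeasurable.aemeasurable
    (ae_pi_prod_nonneg hρ_nonneg) F

end PiWithDensity

section UnitCube

lemma volume_restrict_Icc_pi {ι : Type*} [Fintype ι] {α : ι → Type*} [∀ i, MeasureSpace (α i)]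
    [∀ i, SigmaFinite (volume : Measure (α i))] [∀ i, Preorder (α i)] (a b : ∀ i, α i) :
    (volume : Measure (∀ i, α i)).restrict (Set.Icc a b)
      = Measure.pi fun i => volume.restrict (Set.Icc (a i) (b i)) := by
  rw [← Set.pi_univ_Icc, volume_pi, Measure.restrict_pi_pi]

variable (ι : Type*) [Fintype ι]

/-- Lebesgue measure on the unit cube `[0,1]^ι`, as a measure on the whole space. -/
noncomputable def unitCubeMeasure : Measure (ι → ℝ) :=
  volume.restrict (Set.Icc 0 1)

lemma unitCubeMeasure_eq_pi :
    unitCubeMeasure ι = Measure.pi fun _ => volume.restrict (Set.Icc (0 : ℝ) 1) :=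
  volume_restrict_Icc_pi 0 1

instance isProbabilityMeasure_unitCubeMeasure : IsProbabilityMeasure (unitCubeMeasure ι) := by
  have hIcc : IsProbabilityMeasure ((volume : Measure ℝ).restrict (Set.Icc 0 1)) := ⟨by simp⟩
  rw [unitCubeMeasure_eq_pi]
  infer_instance

lemma ae_mem_Icc_unitCubeMeasure : ∀ᵐ x ∂unitCubeMeasure ι, x ∈ Set.Icc (0 : ι → ℝ) 1 :=
  ae_restrict_mem measurableSet_Icc

lemma integral_sq_prod_unitCubeMeasure :
    ∫ x, (∏ j, x j) ^ 2 ∂unitCubeMeasure ι = ((3 : ℝ) ^ card ι)⁻¹ := by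
  have hsq : ∫ y in Set.Icc (0 : ℝ) 1, y ^ 2 = 3⁻¹ := by
    rw [integral_Icc_eq_integral_Ioc, ← intervalIntegral.integral_of_le zero_le_one, integral_pow]
    norm_num
  simp_rw [← Finset.prod_pow]
  rw [unitCubeMeasure_eq_pi, integral_fintype_prod_eq_pow (fun y : ℝ => y ^ 2), hsq, inv_pow]

lemma memLp_prod_unitCubeMeasure (p : ENNReal) :
    MemLp (fun x => ∏ j, x j) p (unitCubeMeasure ι) := by
  refine .of_bound (by fun_prop) 1 ?_
  filter_upwards [ae_mem_Icc_unitCubeMeasure ι] with x hx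
  rw [Real.norm_of_nonneg (Finset.prod_nonneg fun j _ => hx.1 j)]
  exact Finset.prod_le_one (fun j _ => hx.1 j) fun j _ => hx.2 j

end UnitCube

section BoxIndicator

variable {ι : Type*} [Fintype ι]

/-- The indicator `1_{[0,x)}(t)` of the anchored box `[0,x)`, written as a product over the
coordinates; the constraints `0 ≤ t j` are omitted because `t` ranges over the unit cube. -/
noncomputable def boxIndicator (t x : ι → ℝ) : ℝ :=
  ∏ j, if t j < x j then 1 else 0

lemma boxIndicator_eq_ite (t x : ι → ℝ) [Decidable (∀ j, t j < x j)] :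
    boxIndicator t x = if ∀ j, t j < x j then 1 else 0 := by
  rw [boxIndicator, Finset.prod_ite_zero]
  simp

lemma boxIndicator_sq (t x : ι → ℝ) : boxIndicator t x ^ 2 = boxIndicator t x := by
  classical
  rw [boxIndicator_eq_ite]
  split_ifs <;> norm_num

lemma norm_boxIndicator_le_one (t x : ι → ℝ) : ‖boxIndicator t x‖ ≤ 1 := by
  classical
  rw [boxIndicator_eq_ite]
  split_ifs <;> norm_num

lemma measurable_boxIndicator :
    Measurable (Function.uncurry (boxIndicator : (ι → ℝ) → (ι → ℝ) → ℝ)) :=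
  Finset.measurable_prod _ fun _ _ =>
    .ite (measurableSet_lt (by fun_prop) (by fun_prop)) measurable_const measurable_const

lemma memLp_boxIndicator (t : ι → ℝ) (p : ENNReal) :
    MemLp (boxIndicator t) p (unitCubeMeasure ι) :=
  .of_bound (measurable_boxIndicator.comp measurable_prodMk_left).aestronglyMeasurable 1
    (.of_forall (norm_boxIndicator_le_one t))

lemma integral_boxIndicator_right {t : ι → ℝ} (ht : t ∈ Set.Icc 0 1) :
    ∫ x, boxIndicator t x ∂unitCubeMeasure ι = ∏ j, (1 - t j) := by
  simp only [boxIndicator, unitCubeMeasure_eq_pi]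
  rw [integral_fintype_prod_eq_prod fun j (y : ℝ) => if t j < y then (1 : ℝ) else 0]
  refine Finset.prod_congr rfl fun j _ => ?_
  have h0 : 0 ≤ t j := ht.1 j
  have h1 : t j ≤ 1 := ht.2 j
  have hset : Set.Ioi (t j) ∩ Set.Icc 0 1 = Set.Ioc (t j) 1 := by
    ext y
    grind
  calc ∫ y in Set.Icc (0 : ℝ) 1, (if t j < y then (1 : ℝ) else 0)
      = (volume.restrict (Set.Icc (0 : ℝ) 1)).real (Set.Ioi (t j)) :=
        integral_indicator_one measurableSet_Ioi
    _ = 1 - t j := by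
        rw [measureReal_restrict_apply measurableSet_Ioi, hset, Real.volume_real_Ioc_of_le h1]

lemma integral_boxIndicator_left {x : ι → ℝ} (hx : x ∈ Set.Icc 0 1) :
    ∫ t, boxIndicator t x ∂unitCubeMeasure ι = ∏ j, x j := by
  simp only [boxIndicator, unitCubeMeasure_eq_pi]
  rw [integral_fintype_prod_eq_prod fun j (y : ℝ) => if y < x j then (1 : ℝ) else 0]
  refine Finset.prod_congr rfl fun j _ => ?_
  have h0 : 0 ≤ x j := hx.1 j
  have h1 : x j ≤ 1 := hx.2 j
  have hset : Set.Iio (x j) ∩ Set.Icc 0 1 = Set.Ico 0 (x j) := by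
    ext y
    grind
  calc ∫ y in Set.Icc (0 : ℝ) 1, (if y < x j then (1 : ℝ) else 0)
      = (volume.restrict (Set.Icc (0 : ℝ) 1)).real (Set.Iio (x j)) :=
        integral_indicator_one measurableSet_Iio
    _ = x j := by
        rw [measureReal_restrict_apply measurableSet_Iio, hset, Real.volume_real_Ico_of_le h0,
          sub_zero]

lemma integral_sq_boxIndicator_div {t : ι → ℝ} (ht : t ∈ Set.Icc 0 1) (r : ℝ) :
    ∫ x, (boxIndicator t x / r) ^ 2 ∂unitCubeMeasure ι = (∏ j, (1 - t j)) / r / r := by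
  simp_rw [div_pow, boxIndicator_sq]
  rw [integral_div, integral_boxIndicator_right ht, sq, div_div]

end BoxIndicator

section Discrepancy

variable {ι : Type*} [Fintype ι] {ρ : (ι → ℝ) → ℝ}

lemma ae_integral_sq_boxIndicator_div :
    (fun t => ∫ x, (boxIndicator t x / ρ t) ^ 2 ∂unitCubeMeasure ι)
      =ᵐ[(unitCubeMeasure ι).withDensity fun t => ENNReal.ofReal (ρ t)]
      fun t => (∏ j, (1 - t j)) / ρ t / ρ t := by
  filter_upwards [(withDensity_absolutelyContinuous _ _).ae_le (ae_mem_Icc_unitCubeMeasure ι)]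
    with t ht using integral_sq_boxIndicator_div ht (ρ t)

lemma memLp_boxIndicator_div (hρ : AEMeasurable ρ (unitCubeMeasure ι))
    (hρ_pos : ∀ᵐ t ∂unitCubeMeasure ι, 0 < ρ t)
    (hint : Integrable (fun t => (∏ j, (1 - t j)) / ρ t) (unitCubeMeasure ι)) :
    MemLp (Function.uncurry fun t x => boxIndicator t x / ρ t) 2
      (((unitCubeMeasure ι).withDensity fun t => ENNReal.ofReal (ρ t)).prod
        (unitCubeMeasure ι)) := by
  have hmeas : AEStronglyMeasurable (Function.uncurry fun t x => boxIndicator t x / ρ t)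
      (((unitCubeMeasure ι).withDensity fun t => ENNReal.ofReal (ρ t)).prod
        (unitCubeMeasure ι)) :=
    (measurable_boxIndicator.aemeasurable.div
      (hρ.mono_ac (withDensity_absolutelyContinuous _ _)).comp_fst).aestronglyMeasurable
  rw [memLp_two_iff_integrable_sq hmeas, integrable_prod_iff (by fun_prop)]
  constructor
  · refine .of_forall fun t => ?_
    simpa only [Function.uncurry_apply_pair, div_eq_mul_inv] using
      ((memLp_boxIndicator t 2).mul_const (ρ t)⁻¹).integrable_sq
  · simp_rw [Function.uncurry_apply_pair, norm_pow, Real.norm_eq_abs, sq_abs]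
    rw [integrable_congr ae_integral_sq_boxIndicator_div]
    exact (integrable_div_withDensity_ofReal_iff hρ hρ_pos).2 hint

theorem integral_sq_discrepancy_eq {κ : Type*} [Fintype κ] [Nonempty κ]
    (hρ_one : ∫ t, ρ t ∂unitCubeMeasure ι = 1) (hρ_pos : ∀ᵐ t ∂unitCubeMeasure ι, 0 < ρ t)
    (hint : Integrable (fun t => (∏ j, (1 - t j)) / ρ t) (unitCubeMeasure ι)) (c : ℝ) :
    ∫ T, (∏ k, ρ (T k)) * ∫ x, (∑ k, c / (card κ * ρ (T k)) * boxIndicator (T k) x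
        - ∏ j, x j) ^ 2 ∂unitCubeMeasure ι ∂Measure.pi (fun _ : κ => unitCubeMeasure ι)
      = (1 - c) ^ 2 * ((3 : ℝ) ^ card ι)⁻¹ + c ^ 2 *
        ((∫ t, (∏ j, (1 - t j)) / ρ t ∂unitCubeMeasure ι - ((3 : ℝ) ^ card ι)⁻¹) / card κ) := by
  have hρ : Integrable ρ (unitCubeMeasure ι) := .of_integral_ne_zero (by simp [hρ_one])
  have hρ_nonneg : 0 ≤ᵐ[unitCubeMeasure ι] ρ := hρ_pos.mono fun _ ht => ht.le
  have := isProbabilityMeasure_withDensity_ofReal hρ_nonneg hρ_one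
  have hmean : ∀ᵐ x ∂unitCubeMeasure ι, ∫ t, boxIndicator t x / ρ t
      ∂(unitCubeMeasure ι).withDensity (fun t => ENNReal.ofReal (ρ t)) = ∏ j, x j := by
    filter_upwards [ae_mem_Icc_unitCubeMeasure ι] with x hx
    rw [integral_div_withDensity_ofReal hρ.aemeasurable hρ_pos, integral_boxIndicator_left hx]
  have hweight (T : κ → ι → ℝ) (x : ι → ℝ) (k : κ) : c / (card κ * ρ (T k)) * boxIndicator (T k) x
      = c / card κ * (boxIndicator (T k) x / ρ (T k)) := by
    rw [← div_div, div_mul_eq_mul_div, mul_div_assoc]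
  simp_rw [hweight]
  rw [← integral_pi_withDensity_ofReal (fun _ => hρ) (fun _ => hρ_nonneg),
    integral_pi_integral_sq_sum_div_card_mul_sub
      (memLp_boxIndicator_div hρ.aemeasurable hρ_pos hint) (memLp_prod_unitCubeMeasure ι 2) hmean,
    integral_congr_ae ae_integral_sq_boxIndicator_div,
    integral_div_withDensity_ofReal hρ.aemeasurable hρ_pos, integral_sq_prod_unitCubeMeasure]
  ring

end Discrepancy

lemma div_sub_one_add_mul_eq {a n : ℝ} (ha : a ≠ 0) (hn : n ≠ 0) (C : ℝ) :
    n / (n - 1 + a * C) = a⁻¹ / (a⁻¹ + (C - a⁻¹) / n) := by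
  field_simp
  ring

lemma one_sub_sq_mul_add_sq_mul_eq {z v : ℝ} (hzv : z + v ≠ 0) (c : ℝ) :
    (1 - c) ^ 2 * z + c ^ 2 * v = z / (z + v) * v + (z + v) * (c - z / (z + v)) ^ 2 := by
  field_simp
  ring

/-- For weights `a_k = c/(N ρd(t_k))` the expected squared
discrepancy `E(c)` equals `3^{-d} - 2c 3^{-d} + c²(C/N + 3^{-d}(N-1)/N)`, it
attains its unique minimum over `(0,∞)` at `c* = N/(N-1+3^d C)`, and
`E(c*) = c*·(C - 3^{-d})/N`. -/
theorem optimal_constant_rescaling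
    (d N : ℕ) (hN : 1 ≤ N)
    (ρd : (Fin d → ℝ) → ℝ)
    (hmeas : Measurable ρd)
    (hnonneg : ∀ t, 0 ≤ ρd t)
    (hprob : ∫ t in Set.Icc (0 : Fin d → ℝ) 1, ρd t = 1)
    (hpos : ∀ᵐ t ∂(volume.restrict (Set.Icc (0 : Fin d → ℝ) 1)), 0 < ρd t)
    (hint : IntegrableOn (fun t : Fin d → ℝ => (∏ j, (1 - t j)) / ρd t)
      (Set.Icc (0 : Fin d → ℝ) 1))
    (C : ℝ)
    (hC : C = ∫ t in Set.Icc (0 : Fin d → ℝ) 1, (∏ j, (1 - t j)) / ρd t)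
    (Ef : ℝ → ℝ)
    (hEf : ∀ c : ℝ, Ef c = ∫ T in Set.Icc (0 : Fin N → Fin d → ℝ) 1,
        (∏ k, ρd (T k)) *
          ∫ x in Set.Icc (0 : Fin d → ℝ) 1,
            ((∑ k, (c / (N * ρd (T k))) *
                (if ∀ j, T k j < x j then (1 : ℝ) else 0)) - ∏ j, x j) ^ 2)
    (cstar : ℝ)
    (hcstar : cstar = N / ((N : ℝ) - 1 + 3 ^ d * C)) :
    (∀ c : ℝ, Ef c = (3 : ℝ) ^ (-(d : ℤ)) - 2 * c * (3 : ℝ) ^ (-(d : ℤ))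
        + c ^ 2 * (C / N + (3 : ℝ) ^ (-(d : ℤ)) * ((N : ℝ) - 1) / N)) ∧
    0 < cstar ∧
    (∀ c : ℝ, 0 < c → c ≠ cstar → Ef cstar < Ef c) ∧
    Ef cstar = cstar * ((C - (3 : ℝ) ^ (-(d : ℤ))) / N) := by
  have : NeZero N := ⟨by omega⟩
  set z : ℝ := (3 ^ d)⁻¹ with hz
  have hform (c : ℝ) : Ef c = (1 - c) ^ 2 * z + c ^ 2 * ((C - z) / N) := by
    have hE := integral_sq_discrepancy_eq (κ := Fin N) hprob hpos hint c
    simp only [boxIndicator_eq_ite, card_fin] at hE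
    rw [hEf, hC, volume_restrict_Icc_pi]
    exact hE
  have hz_pos : 0 < z := by positivity
  have hv : 0 ≤ (C - z) / N := by
    have hEf_one : 0 ≤ Ef 1 := hEf 1 ▸ integral_nonneg fun T => mul_nonneg
      (Finset.prod_nonneg fun k _ => hnonneg (T k)) (integral_nonneg fun x => sq_nonneg _)
    simpa [hform] using hEf_one
  have hzv : 0 < z + (C - z) / N := by positivity
  have hcstar_eq : cstar = z / (z + (C - z) / N) :=
    hcstar.trans (div_sub_one_add_mul_eq (by positivity) (NeZero.ne _) C)
  have hsquare (c : ℝ) := (hform c).trans (one_sub_sq_mul_add_sq_mul_eq hzv.ne' c)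
  rw [zpow_neg, zpow_natCast, ← hz]
  refine ⟨fun c => ?_, hcstar_eq ▸ div_pos hz_pos hzv, fun c _ hne => ?_, ?_⟩
  · rw [hform]
    field_simp
    ring
  · have hgap : 0 < (z + (C - z) / N) * (c - cstar) ^ 2 := by positivity [sub_ne_zero.2 hne]
    simpa [hsquare, ← hcstar_eq] using hgap
  · simp [hsquare, ← hcstar_eq]
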